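/- Let X be a complex Banach space, let T be a bounded linear operator on X that is ag-Drazin invertible in the Banach algebra L(X) of bounded linear operators on X, and let F be a bounded linear operator on X such that F^n has finite rank for some positive integer n (i.e., the range of F^n is finite-dimensional). If TF = FT, then T + F is ag-Drazin invertible in L(X). -/

import Mathlib

open Filter Topology

/-- An element of a complex Banach algebra is quasinilpotent if its spectrum is `{0}`. -/
def IsQuasinilpotent {A : Type*} [NormedRing A] [NormedAlgebra ℂ A] (b : A) : Prop :=
  spectrum ℂ b = {0}

/-- `a` is generalized Drazin invertible. -/
def IsGDrazinInv {A : Type*} [NormedRing A] [NormedAlgebra ℂ A] (a : A) : Prop :=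
  ∃ x : A, a * x = x * a ∧ x * a * x = x ∧ IsQuasinilpotent (a - a ^ 2 * x)

/-- `a ∈ A^acc`: `a - λ1` is generalized Drazin invertible for all nonzero `λ`. -/
def MemAcc {A : Type*} [NormedRing A] [NormedAlgebra ℂ A] (a : A) : Prop :=
  ∀ l : ℂ, l ≠ 0 → IsGDrazinInv (a - l • (1 : A))

/-- `x` is an ag-Drazin inverse of `a`. -/
def IsAgDrazinInverseOf {A : Type*} [NormedRing A] [NormedAlgebra ℂ A] (x a : A) : Prop :=
  a * x = x * a ∧ x * a * x = x ∧ MemAcc (a - a ^ 2 * x)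

/-- `a` is ag-Drazin invertible. -/
def IsAgDrazinInv {A : Type*} [NormedRing A] [NormedAlgebra ℂ A] (a : A) : Prop :=
  ∃ x : A, IsAgDrazinInverseOf x a

/-- The generalized Drazin spectrum. -/
def gDrazinSpectrum {A : Type*} [NormedRing A] [NormedAlgebra ℂ A] (a : A) : Set ℂ :=
  {l : ℂ | ¬ IsGDrazinInv (a - l • (1 : A))}

/-- The ag-Drazin spectrum. -/
def agDrazinSpectrum {A : Type*} [NormedRing A] [NormedAlgebra ℂ A] (a : A) : Set ℂ :=
  {l : ℂ | ¬ IsAgDrazinInv (a - l • (1 : A))}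

/-!
The difficulty is that a given ag-Drazin inverse of `T` need not commute with `F`. The spectrum of
`T` is the union of a compact set avoiding `0` and a set whose points other than `0` are isolated.
Hence for small `r > 0` an idempotent `f` cuts out the part of the spectrum inside `|z| < r`: only
finitely many of the isolated points lie outside. By Rosenblum's theorem on `a y = y b`, this `f`,
and with it the ag-Drazin inverse it determines, commutes with everything that commutes with `T`.
The problem thus moves to the bicommutant of `{T, F}`, a commutative Banach algebra in which
invertibility and the relevant idempotents are read off from characters. There `F` is integral over
`ℂ`, so it has a spectral idempotent `q` at `0`: on the part `q = 1` the characters do not see `F`,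
and on the part `q = 0` everything is integral over `ℂ`, hence has finite spectrum.
-/

section FiniteRank

variable {K U V : Type*} [CommRing K] [AddCommGroup U] [Module K U] [AddCommGroup V] [Module K V]

theorem aeval_comp_eq_comp_aeval {a : Module.End K V} {b : Module.End K U} {j : U →ₗ[K] V}
    (hj : a ∘ₗ j = j ∘ₗ b) (p : Polynomial K) :
    Polynomial.aeval a p ∘ₗ j = j ∘ₗ Polynomial.aeval b p := by
  have hpow (k : ℕ) (u : U) : (a ^ k) (j u) = j ((b ^ k) u) :=
    LinearMap.congr_fun (Module.End.commute_pow_left_of_commute hj k) u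
  ext u
  simp [Polynomial.aeval_eq_sum_range, hpow]

theorem isIntegral_comp_of_finite [Module.Finite K U] (j : U →ₗ[K] V) (r : V →ₗ[K] U) :
    IsIntegral K (j ∘ₗ r : Module.End K V) := by
  obtain ⟨p, hp, hpr⟩ := Algebra.IsIntegral.isIntegral (R := K) (r ∘ₗ j : Module.End K U)
  refine ⟨p * Polynomial.X, hp.mul Polynomial.monic_X, ?_⟩
  calc Polynomial.aeval (j ∘ₗ r : Module.End K V) (p * Polynomial.X)
      = (Polynomial.aeval (j ∘ₗ r : Module.End K V) p ∘ₗ j) ∘ₗ r := by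
        rw [map_mul, Polynomial.aeval_X, Module.End.mul_eq_comp, LinearMap.comp_assoc]
    _ = (j ∘ₗ Polynomial.aeval (r ∘ₗ j : Module.End K U) p) ∘ₗ r := by
        rw [aeval_comp_eq_comp_aeval (LinearMap.comp_assoc ..)]
    _ = 0 := by
        rw [Polynomial.aeval_def, hpr, LinearMap.comp_zero, LinearMap.zero_comp]

theorem isIntegral_mul_of_finite_range (b w : Module.End K V)
    [Module.Finite K (LinearMap.range b)] : IsIntegral K (b * w) :=
  isIntegral_comp_of_finite (LinearMap.range b).subtype (b.rangeRestrict ∘ₗ w)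

theorem isIntegral_continuousLinearMap_mul_of_finite_range [TopologicalSpace V]
    [IsTopologicalAddGroup V] [ContinuousConstSMul K V] (b w : V →L[K] V)
    [Module.Finite K (LinearMap.range (b : V →ₗ[K] V))] : IsIntegral K (b * w) := by
  let toEnd : (V →L[K] V) →ₐ[K] Module.End K V :=
    { ContinuousLinearMap.toLinearMapRingHom with commutes' := fun _ ↦ rfl }
  rw [← isIntegral_algHom_iff toEnd ContinuousLinearMap.coe_injective]
  exact isIntegral_mul_of_finite_range (b : Module.End K V) (w : Module.End K V)

end FiniteRank

theorem exists_isIdempotentElem_of_isIntegral {K R : Type*} [Field K] [CommRing R] [Algebra K R]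
    {a : R} (ha : IsIntegral K a) :
    ∃ (c : R) (m : ℕ), IsIdempotentElem (a * c) ∧ a ^ m * (1 - a * c) = 0 := by
  obtain ⟨p, hp, hpa⟩ := ha
  obtain ⟨q, hpq, hq⟩ := p.exists_eq_pow_rootMultiplicity_mul_and_not_dvd hp.ne_zero 0
  generalize p.rootMultiplicity 0 = m at hpq
  rw [map_zero, sub_zero] at hpq hq
  have hcoprime : IsCoprime (Polynomial.X ^ (m + 1)) q :=
    (Polynomial.irreducible_X.coprime_iff_not_dvd.mpr hq).pow_left
  obtain ⟨u, v, huv⟩ := hcoprime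
  have hbezout : Polynomial.aeval a u * a ^ (m + 1) + Polynomial.aeval a v * Polynomial.aeval a q
      = 1 := by
    simpa using congrArg (Polynomial.aeval a) huv
  have hannihilates : a ^ m * Polynomial.aeval a q = 0 := by
    have hpa' : Polynomial.aeval a p = 0 := hpa
    simpa [hpq] using hpa'
  have hvanish : a ^ m * (1 - a * (Polynomial.aeval a u * a ^ m)) = 0 := by
    linear_combination Polynomial.aeval a v * hannihilates - a ^ m * hbezout
  refine ⟨Polynomial.aeval a u * a ^ m, m, ?_, hvanish⟩
  rw [isIdempotentElem_iff_mul_one_sub_self]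
  linear_combination a * Polynomial.aeval a u * hvanish

theorem isIntegral_mul_of_isIdempotentElem {K R : Type*} [CommRing K] [CommRing R] [Algebra K R]
    {f c : R} {n : ℕ} (hfc : IsIdempotentElem (f * c)) (hf : ∀ w : R, IsIntegral K (f ^ n * w))
    (b : R) : IsIntegral K (b * (f * c)) := by
  rw [← hfc.pow_succ_eq n]
  convert hf (b * c ^ (n + 1) * f) using 1
  ring

section Commutation

variable {A : Type*}

theorem commute_of_commute_mul [Ring A] {a x z : A} (hax : a * x = x * a) (hxax : x * a * x = x)
    (hza : Commute z a) (hze : Commute z (a * x)) : Commute z x :=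
  calc z * x = z * (a * x) * x := by rw [hax, mul_assoc, hxax]
    _ = x * a * z * x := by rw [hze.eq, hax]
    _ = x * (z * (a * x)) := by rw [mul_assoc x, ← hza.eq, mul_assoc, mul_assoc]
    _ = x * z := by rw [hze.eq, ← mul_assoc, ← mul_assoc, hxax]

theorem isUnit_mul_add_one_sub [Ring A] {a x : A} (hax : a * x = x * a) (hxax : x * a * x = x) :
    IsUnit (a * (a * x) + (1 - a * x)) := by
  have hex : a * x * x = x := by rw [hax, hxax]
  have hxe : x * (a * x) = x := by rw [← mul_assoc, hxax]
  have hee : a * x * (a * x) = a * x := by rw [mul_assoc, hxe]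
  have hea : a * (a * x) = a * x * a := by rw [mul_assoc, hax]
  refine isUnit_iff_exists.mpr ⟨x + (1 - a * x), ?_, ?_⟩
  · simp only [add_mul, mul_add, sub_mul, mul_sub, one_mul, mul_one, mul_assoc a (a * x), hex, hee]
    abel
  · rw [hea]
    simp only [add_mul, mul_add, sub_mul, mul_sub, one_mul, mul_one, ← mul_assoc x (a * x) a, hxe,
      ← mul_assoc (a * x) (a * x) a, hee, ← hax]
    abel

theorem resolvent_mul_eq_mul_resolvent {𝕜 : Type*} [CommRing 𝕜] [Ring A] [Algebra 𝕜 A]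
    {a b y : A} {z : 𝕜} (hab : a * y = y * b) (ha : z ∈ resolventSet 𝕜 a)
    (hb : z ∈ resolventSet 𝕜 b) : resolvent a z * y = y * resolvent b z := by
  have hy : (algebraMap 𝕜 A z - a) * y = y * (algebraMap 𝕜 A z - b) := by
    rw [sub_mul, mul_sub, hab, Algebra.commutes]
  rw [resolvent, Ring.inverse_mul_eq_iff_eq_mul _ _ _ ha, ← mul_assoc, hy, mul_assoc, resolvent,
    Ring.mul_inverse_cancel _ hb, mul_one]

variable [NormedRing A] [NormedAlgebra ℂ A] [CompleteSpace A]

-- Rosenblum's theorem: `(z - a)⁻¹ y = y (z - b)⁻¹` extends to an entire function of `z` that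
-- vanishes at infinity.
theorem eq_zero_of_mul_eq_mul_of_disjoint_spectrum {a b y : A} (hab : a * y = y * b)
    (hdisj : Disjoint (spectrum ℂ a) (spectrum ℂ b)) : y = 0 := by
  classical
  have mem_or (z : ℂ) : z ∈ resolventSet ℂ a ∨ z ∈ resolventSet ℂ b := by
    by_contra! h
    exact Set.disjoint_left.mp hdisj h.1 h.2
  let g (z : ℂ) : A := if z ∈ resolventSet ℂ a then resolvent a z * y else y * resolvent b z
  have g_eq_left {z : ℂ} (ha : z ∈ resolventSet ℂ a) : g z = resolvent a z * y := if_pos ha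
  have g_eq_right {z : ℂ} (hb : z ∈ resolventSet ℂ b) : g z = y * resolvent b z := by
    by_cases ha : z ∈ resolventSet ℂ a
    · rw [g_eq_left ha, resolvent_mul_eq_mul_resolvent hab ha hb]
    · exact if_neg ha
  have g_differentiable : Differentiable ℂ g := fun z ↦ by
    rcases mem_or z with ha | hb
    · refine ((spectrum.hasDerivAt_resolvent_const_left ha).differentiableAt.mul_const y)
        |>.congr_of_eventuallyEq ?_
      filter_upwards [(spectrum.isOpen_resolventSet a).mem_nhds ha] with w using g_eq_left
    · refine ((spectrum.hasDerivAt_resolvent_const_left hb).differentiableAt.const_mul y)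
        |>.congr_of_eventuallyEq ?_
      filter_upwards [(spectrum.isOpen_resolventSet b).mem_nhds hb] with w using g_eq_right
  have g_tendsto : Tendsto g (cocompact ℂ) (𝓝 0) := by
    rw [← Metric.cobounded_eq_cocompact]
    refine Tendsto.if' ?_ ?_
    · simpa using (spectrum.resolvent_tendsto_cobounded a).mul_const y
    · simpa using (spectrum.resolvent_tendsto_cobounded b).const_mul y
  have g_zero : g 0 = 0 := g_differentiable.apply_eq_of_tendsto_cocompact 0 g_tendsto
  rcases mem_or 0 with ha | hb
  · exact (spectrum.isUnit_resolvent.mp ha).mul_right_eq_zero.mp (g_eq_left ha ▸ g_zero)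
  · exact (spectrum.isUnit_resolvent.mp hb).mul_left_eq_zero.mp (g_eq_right hb ▸ g_zero)

-- Rosenblum's theorem kills the two off-diagonal corners of `z` with respect to `e`.
theorem commute_of_disjoint_spectrum {a e z : A} (he : IsIdempotentElem e) (hae : Commute a e)
    (μ : ℂ) (hdisj : Disjoint (spectrum ℂ (a * e + μ • (1 - e))) (spectrum ℂ (a * (1 - e))))
    (hza : Commute z a) : Commute z e := by
  have hae' : Commute a (1 - e) := (Commute.one_right a).sub_right hae
  have upper_corner : e * z * (1 - e) = 0 := by
    refine eq_zero_of_mul_eq_mul_of_disjoint_spectrum ?_ hdisj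
    calc (a * e + μ • (1 - e)) * (e * z * (1 - e))
        = a * (e * e) * z * (1 - e) + μ • ((1 - e) * e * z * (1 - e)) := by
          simp only [add_mul, smul_mul_assoc, mul_assoc]
      _ = e * (a * z) * (1 - e) := by
          rw [he.eq, he.one_sub_mul_self, hae.eq]; simp [mul_assoc]
      _ = e * z * (a * (1 - e)) := by rw [← hza.eq]; simp only [mul_assoc]
      _ = e * z * (1 - e) * (a * (1 - e)) := by
          rw [hae'.eq, mul_assoc _ (1 - e), ← mul_assoc (1 - e) (1 - e), he.one_sub.eq]
  have lower_corner : (1 - e) * z * e = 0 := by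
    refine eq_zero_of_mul_eq_mul_of_disjoint_spectrum ?_ hdisj.symm
    calc a * (1 - e) * ((1 - e) * z * e)
        = a * ((1 - e) * (1 - e)) * z * e := by simp only [mul_assoc]
      _ = (1 - e) * (a * z) * e := by rw [he.one_sub.eq, hae'.eq, mul_assoc (1 - e)]
      _ = (1 - e) * z * (a * e) := by rw [← hza.eq]; simp only [mul_assoc]
      _ = (1 - e) * z * e * (a * e + μ • (1 - e)) := by
          rw [mul_add, mul_smul_comm, mul_assoc _ e (1 - e), he.mul_one_sub_self, hae.eq,
            mul_assoc _ e (e * a), ← mul_assoc e e, he.eq]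
          simp
  have ez_eq : e * z = e * z * e := by rwa [mul_sub, mul_one, sub_eq_zero] at upper_corner
  have ze_eq : z * e = e * z * e := by rwa [sub_mul, one_mul, sub_mul, sub_eq_zero] at lower_corner
  exact ze_eq.trans ez_eq.symm

theorem commute_of_isQuasinilpotent {a x z : A} (hax : a * x = x * a) (hxax : x * a * x = x)
    (hquasi : IsQuasinilpotent (a - a ^ 2 * x)) (hza : Commute z a) : Commute z x := by
  have he : IsIdempotentElem (a * x) := by
    rw [IsIdempotentElem, mul_assoc, ← mul_assoc x, hxax]
  have hae : Commute a (a * x) := (Commute.refl a).mul_right hax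
  refine commute_of_commute_mul hax hxax hza (commute_of_disjoint_spectrum he hae 1 ?_ hza)
  have hcorner : a * (1 - a * x) = a - a ^ 2 * x := by rw [mul_sub, mul_one, sq, mul_assoc]
  rw [hcorner, hquasi, one_smul, Set.disjoint_singleton_right, spectrum.zero_notMem_iff]
  exact isUnit_mul_add_one_sub hax hxax

end Commutation

theorem IsGDrazinInv.nontrivial {A : Type*} [NormedRing A] [NormedAlgebra ℂ A] {a : A}
    (ha : IsGDrazinInv a) : Nontrivial A := by
  obtain ⟨x, -, -, hquasi⟩ := ha
  by_contra hA
  rw [not_nontrivial_iff_subsingleton] at hA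
  exact Set.singleton_ne_empty _ (hquasi.symm.trans (spectrum.of_subsingleton _))

theorem MemAcc.nontrivial {A : Type*} [NormedRing A] [NormedAlgebra ℂ A] {a : A} (ha : MemAcc a) :
    Nontrivial A :=
  (ha 1 one_ne_zero).nontrivial

section Commutative

open WeakDual

variable {R : Type*} [NormedCommRing R] [NormedAlgebra ℂ R]

theorem character_apply_eq_zero_or_one {e : R} (he : IsIdempotentElem e) (φ : characterSpace ℂ R) :
    φ e = 0 ∨ φ e = 1 :=
  IsIdempotentElem.iff_eq_zero_or_one.mp (he.map φ)

theorem character_apply_eq_one_of_mul {e q : R} (he : IsIdempotentElem e) {φ : characterSpace ℂ R}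
    (hφ : φ (e * q) = 1) : φ e = 1 :=
  (character_apply_eq_zero_or_one he φ).resolve_left fun h ↦ by simp [map_mul, h] at hφ

/-- `p` is the spectral idempotent of `a` at `l`: its Gelfand transform is the indicator function
of the set of characters sending `a` to `l`, which is empty when `l` lies outside the spectrum. -/
structure IsSpectralIdempotent (a : R) (l : ℂ) (p : R) : Prop where
  isIdempotentElem : IsIdempotentElem p
  apply_eq_one_iff (φ : characterSpace ℂ R) : φ p = 1 ↔ φ a = l

theorem isSpectralIdempotent_sub_smul_one_iff {a p : R} {l : ℂ} :
    IsSpectralIdempotent (a - l • (1 : R)) 0 p ↔ IsSpectralIdempotent a l p := by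
  constructor <;> refine fun h ↦ ⟨h.isIdempotentElem, fun φ ↦ ?_⟩ <;>
    simpa [sub_eq_zero] using h.apply_eq_one_iff φ

theorem isSpectralIdempotent_one_sub {a c : R} {m : ℕ} (hac : IsIdempotentElem (a * c))
    (hm : a ^ m * (1 - a * c) = 0) : IsSpectralIdempotent a 0 (1 - a * c) where
  isIdempotentElem := hac.one_sub
  apply_eq_one_iff φ := by
    refine ⟨fun hφ ↦ ?_, fun hφ ↦ by simp [hφ]⟩
    have : φ a ^ m * φ (1 - a * c) = 0 := by rw [← map_pow, ← map_mul, hm, map_zero]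
    rw [hφ, mul_one] at this
    exact eq_zero_of_pow_eq_zero this

theorem IsSpectralIdempotent.piecewise {a b c p p' q : R} {l : ℂ} (hq : IsIdempotentElem q)
    (ha : IsSpectralIdempotent a l p) (hb : IsSpectralIdempotent b l p')
    (hca : ∀ φ : characterSpace ℂ R, φ q = 1 → φ c = φ a)
    (hcb : ∀ φ : characterSpace ℂ R, φ q = 0 → φ c = φ b) :
    IsSpectralIdempotent c l (p * q + p' * (1 - q)) where
  isIdempotentElem := by
    have hp := ha.isIdempotentElem.eq
    have hp' := hb.isIdempotentElem.eq
    rw [IsIdempotentElem]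
    linear_combination q ^ 2 * hp + (1 - q) ^ 2 * hp' + (p + p' - 2 * p * p') * hq.eq
  apply_eq_one_iff φ := by
    rcases character_apply_eq_zero_or_one hq φ with hφ | hφ
    · simpa [hφ, hcb φ hφ] using hb.apply_eq_one_iff φ
    · simpa [hφ, hca φ hφ] using ha.apply_eq_one_iff φ

variable [CompleteSpace R]

theorem isUnit_iff_forall_character_ne_zero {a : R} :
    IsUnit a ↔ ∀ φ : characterSpace ℂ R, φ a ≠ 0 := by
  rw [← spectrum.zero_notMem_iff ℂ, CharacterSpace.mem_spectrum_iff_exists, not_exists]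

theorem isUnit_mul_add_one_sub_of_forall_character {a e : R} (he : IsIdempotentElem e)
    (hae : ∀ φ : characterSpace ℂ R, φ e = 1 → φ a ≠ 0) : IsUnit (a * e + (1 - e)) := by
  refine isUnit_iff_forall_character_ne_zero.mpr fun φ ↦ ?_
  rcases character_apply_eq_zero_or_one he φ with hφ | hφ
  · simp [hφ]
  · simpa [hφ] using hae φ hφ

theorem exists_mul_eq_and_mul_mul_eq {a e : R} (he : IsIdempotentElem e)
    (hae : ∀ φ : characterSpace ℂ R, φ e = 1 → φ a ≠ 0) : ∃ x : R, a * x = e ∧ x * a * x = x := by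
  obtain ⟨v, hv⟩ := (isUnit_mul_add_one_sub_of_forall_character he hae).exists_right_inv
  have hav : a * (v * e) = e := by linear_combination e * hv + (1 - a) * v * he.eq
  exact ⟨v * e, hav, by linear_combination v * e * hav + v * he.eq⟩

theorem isGDrazinInv_iff_exists_isSpectralIdempotent [Nontrivial R] {a : R} :
    IsGDrazinInv a ↔ ∃ p, IsSpectralIdempotent a 0 p := by
  constructor
  · rintro ⟨x, -, hxax, hquasi⟩
    have hee : IsIdempotentElem (a * x) := by
      rw [IsIdempotentElem]
      linear_combination a * hxax
    refine ⟨1 - a * x, hee.one_sub, fun φ ↦ ⟨fun hφ ↦ ?_, fun hφ ↦ by simp [hφ]⟩⟩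
    have hmem : φ (a - a ^ 2 * x) ∈ spectrum ℂ (a - a ^ 2 * x) := AlgHom.apply_mem_spectrum φ _
    have hcorner : a - a ^ 2 * x = a * (1 - a * x) := by ring
    rw [hquasi, Set.mem_singleton_iff, hcorner, map_mul, hφ, mul_one] at hmem
    exact hmem
  · rintro ⟨p, hp⟩
    have hne (φ : characterSpace ℂ R) (hφ : φ (1 - p) = 1) : φ a ≠ 0 := fun hφa ↦ by
      simp [(hp.apply_eq_one_iff φ).mpr hφa] at hφ
    obtain ⟨x, hax, hxax⟩ := exists_mul_eq_and_mul_mul_eq hp.isIdempotentElem.one_sub hne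
    refine ⟨x, mul_comm a x, hxax, ?_⟩
    refine Set.eq_singleton_iff_nonempty_unique_mem.mpr ⟨spectrum.nonempty _, fun z hz ↦ ?_⟩
    obtain ⟨φ, rfl⟩ := CharacterSpace.mem_spectrum_iff_exists.mp hz
    have hcorner : a - a ^ 2 * x = a * p := by linear_combination -a * hax
    rcases character_apply_eq_zero_or_one hp.isIdempotentElem φ with hφ | hφ
    · simp [hcorner, hφ]
    · simp [hcorner, (hp.apply_eq_one_iff φ).mp hφ]

theorem isGDrazinInv_of_isIntegral [Nontrivial R] {a : R} (ha : IsIntegral ℂ a) :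
    IsGDrazinInv a := by
  obtain ⟨c, m, hac, hm⟩ := exists_isIdempotentElem_of_isIntegral ha
  exact isGDrazinInv_iff_exists_isSpectralIdempotent.mpr ⟨_, isSpectralIdempotent_one_sub hac hm⟩

theorem memAcc_of_isIntegral [Nontrivial R] {a : R} (ha : IsIntegral ℂ a) : MemAcc a :=
  fun l _ ↦ isGDrazinInv_of_isIntegral (ha.sub (isIntegral_one.smul l))

theorem memAcc_iff_exists_isSpectralIdempotent [Nontrivial R] {a : R} :
    MemAcc a ↔ ∀ l : ℂ, l ≠ 0 → ∃ p, IsSpectralIdempotent a l p := by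
  simp only [MemAcc, isGDrazinInv_iff_exists_isSpectralIdempotent,
    isSpectralIdempotent_sub_smul_one_iff]

theorem MemAcc.piecewise {a b c q : R} (hq : IsIdempotentElem q) (ha : MemAcc a) (hb : MemAcc b)
    (hca : ∀ φ : characterSpace ℂ R, φ q = 1 → φ c = φ a)
    (hcb : ∀ φ : characterSpace ℂ R, φ q = 0 → φ c = φ b) : MemAcc c := by
  have := ha.nontrivial
  rw [memAcc_iff_exists_isSpectralIdempotent] at ha hb ⊢
  intro l hl
  obtain ⟨p, hp⟩ := ha l hl
  obtain ⟨p', hp'⟩ := hb l hl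
  exact ⟨_, hp.piecewise hq hp' hca hcb⟩

theorem exists_pos_forall_le_norm_character {a : R} (ha : IsUnit a) :
    ∃ r > 0, ∀ φ : characterSpace ℂ R, r ≤ ‖φ a‖ := by
  have hopen : resolventSet ℂ a ∈ 𝓝 0 :=
    (spectrum.isOpen_resolventSet a).mem_nhds (spectrum.zero_notMem_iff ℂ |>.mpr ha |> not_not.mp)
  obtain ⟨r, hr, hball⟩ := Metric.mem_nhds_iff.mp hopen
  refine ⟨r, hr, fun φ ↦ ?_⟩
  by_contra! hφ
  exact AlgHom.apply_mem_spectrum φ a (hball (mem_ball_zero_iff.mpr hφ))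

-- The point is that `a - l + p` is invertible.
theorem IsSpectralIdempotent.not_accPt {a p : R} {l : ℂ} (hp : IsSpectralIdempotent a l p) :
    ¬ AccPt l (𝓟 (spectrum ℂ a)) := by
  have hunit : IsUnit (a - l • (1 : R) + p) := by
    refine isUnit_iff_forall_character_ne_zero.mpr fun φ ↦ ?_
    rcases character_apply_eq_zero_or_one hp.isIdempotentElem φ with hφ | hφ
    · have : φ a ≠ l := fun h ↦ by simp [(hp.apply_eq_one_iff φ).mpr h] at hφ
      simpa [hφ, sub_eq_zero] using this
    · simp [hφ, (hp.apply_eq_one_iff φ).mp hφ]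
  obtain ⟨r, hr, hle⟩ := exists_pos_forall_le_norm_character hunit
  rw [accPt_iff_nhds]
  push Not
  refine ⟨Metric.ball l r, Metric.ball_mem_nhds l hr, fun z hz ↦ ?_⟩
  obtain ⟨φ, rfl⟩ := CharacterSpace.mem_spectrum_iff_exists.mp hz.2
  rcases character_apply_eq_zero_or_one hp.isIdempotentElem φ with hφ | hφ
  · refine absurd (hle φ) (not_le.mpr ?_)
    simpa [hφ, dist_eq_norm] using hz.1
  · exact (hp.apply_eq_one_iff φ).mp hφ

theorem MemAcc.finite_spectrum_inter_le_norm {a : R} (ha : MemAcc a) {r : ℝ} (hr : 0 < r) :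
    (spectrum ℂ a ∩ {z | r ≤ ‖z‖}).Finite := by
  have := ha.nontrivial
  by_contra hinf
  have hcompact : IsCompact (spectrum ℂ a ∩ {z | r ≤ ‖z‖}) :=
    (spectrum.isCompact a).inter_right (isClosed_le continuous_const continuous_norm)
  obtain ⟨l, hl, hacc⟩ := Set.Infinite.exists_accPt_of_subset_isCompact hinf hcompact subset_rfl
  have hl0 : l ≠ 0 := norm_pos_iff.mp (hr.trans_le hl.2)
  obtain ⟨p, hp⟩ := memAcc_iff_exists_isSpectralIdempotent.mp ha l hl0
  exact hp.not_accPt (hacc.mono (principal_mono.mpr Set.inter_subset_left))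

theorem MemAcc.exists_isIdempotentElem_norm_lt {a : R} (ha : MemAcc a) {r : ℝ} (hr : 0 < r) :
    ∃ q : R, IsIdempotentElem q ∧ ∀ φ : characterSpace ℂ R, φ q = 1 ↔ ‖φ a‖ < r := by
  have := ha.nontrivial
  have hfin := ha.finite_spectrum_inter_le_norm hr
  choose! p hp using memAcc_iff_exists_isSpectralIdempotent.mp ha
  have hp' {l : ℂ} (hl : l ∈ hfin.toFinset) : IsSpectralIdempotent a l (p l) :=
    hp l (norm_pos_iff.mp (hr.trans_le (hfin.mem_toFinset.mp hl).2))
  have hq : IsIdempotentElem (∏ l ∈ hfin.toFinset, (1 - p l)) := by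
    rw [IsIdempotentElem, ← Finset.prod_mul_distrib]
    exact Finset.prod_congr rfl fun l hl ↦ (hp' hl).isIdempotentElem.one_sub.eq
  refine ⟨_, hq, fun φ ↦ ?_⟩
  have hzero : φ (∏ l ∈ hfin.toFinset, (1 - p l)) = 0 ↔ r ≤ ‖φ a‖ := by
    rw [map_prod, Finset.prod_eq_zero_iff]
    simp only [map_sub, map_one, sub_eq_zero, eq_comm (a := (1 : ℂ))]
    constructor
    · rintro ⟨l, hl, hφ⟩
      rw [((hp' hl).apply_eq_one_iff φ).mp hφ]
      exact (hfin.mem_toFinset.mp hl).2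
    · intro hφ
      have hmem : φ a ∈ hfin.toFinset := hfin.mem_toFinset.mpr ⟨AlgHom.apply_mem_spectrum φ a, hφ⟩
      exact ⟨φ a, hmem, ((hp' hmem).apply_eq_one_iff φ).mpr rfl⟩
  rw [← not_le, ← hzero]
  rcases character_apply_eq_zero_or_one hq φ with hφ | hφ <;> simp [hφ]

theorem exists_isAgDrazinInverseOf {a e : R} (he : IsIdempotentElem e)
    (hae : ∀ φ : characterSpace ℂ R, φ e = 1 → φ a ≠ 0) (hacc : MemAcc (a * (1 - e))) :
    ∃ x : R, a * x = e ∧ IsAgDrazinInverseOf x a := by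
  obtain ⟨x, hax, hxax⟩ := exists_mul_eq_and_mul_mul_eq he hae
  have hcorner : a - a ^ 2 * x = a * (1 - e) := by linear_combination -a * hax
  exact ⟨x, hax, mul_comm a x, hxax, hcorner ▸ hacc⟩

theorem isAgDrazinInv_iff_exists_isIdempotentElem {a : R} :
    IsAgDrazinInv a ↔ ∃ e : R, IsIdempotentElem e ∧
      (∀ φ : characterSpace ℂ R, φ e = 1 → φ a ≠ 0) ∧ MemAcc (a * (1 - e)) := by
  constructor
  · rintro ⟨x, -, hxax, hacc⟩
    have he : IsIdempotentElem (a * x) := by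
      rw [IsIdempotentElem]
      linear_combination a * hxax
    have hcorner : a - a ^ 2 * x = a * (1 - a * x) := by ring
    exact ⟨a * x, he, fun φ hφ hφa ↦ by simp [hφa] at hφ, hcorner ▸ hacc⟩
  · rintro ⟨e, he, hae, hacc⟩
    obtain ⟨x, -, hx⟩ := exists_isAgDrazinInverseOf he hae hacc
    exact ⟨x, hx⟩

theorem IsAgDrazinInv.exists_isIdempotentElem_norm_lt {a : R} (ha : IsAgDrazinInv a) :
    ∃ r > 0, ∃ f : R, IsIdempotentElem f ∧
      (∀ φ : characterSpace ℂ R, φ f = 1 ↔ ‖φ a‖ < r) ∧ MemAcc (a * f) := by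
  obtain ⟨e, he, hae, hacc⟩ := isAgDrazinInv_iff_exists_isIdempotentElem.mp ha
  have := hacc.nontrivial
  obtain ⟨r, hr, hle⟩ := exists_pos_forall_le_norm_character
    (isUnit_mul_add_one_sub_of_forall_character he hae)
  obtain ⟨q, hq, hqr⟩ := hacc.exists_isIdempotentElem_norm_lt hr
  have hf : IsIdempotentElem ((1 - e) * q) := he.one_sub.mul hq
  refine ⟨r, hr, (1 - e) * q, hf, fun φ ↦ ?_, ?_⟩
  · rcases character_apply_eq_zero_or_one he φ with hφ | hφ
    · simpa [hφ] using hqr φ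
    · simpa [hφ] using hle φ
  · refine MemAcc.piecewise hf hacc (memAcc_of_isIntegral isIntegral_zero) (fun φ hφ ↦ ?_)
      fun φ hφ ↦ by rw [map_mul, hφ, mul_zero, map_zero]
    rw [map_mul, hφ, map_mul, character_apply_eq_one_of_mul he.one_sub hφ]

theorem IsAgDrazinInv.add_of_isIntegral_pow_mul {t f : R} {n : ℕ} (ht : IsAgDrazinInv t)
    (hf : ∀ w : R, IsIntegral ℂ (f ^ n * w)) : IsAgDrazinInv (t + f) := by
  obtain ⟨e, he, hte, hacc⟩ := isAgDrazinInv_iff_exists_isIdempotentElem.mp ht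
  have := hacc.nontrivial
  have hf_int : IsIntegral ℂ f := IsIntegral.of_pow n.succ_pos (by rw [pow_succ]; exact hf f)
  obtain ⟨c, m, hfc, hm⟩ := exists_isIdempotentElem_of_isIntegral hf_int
  have hq := isSpectralIdempotent_one_sub hfc hm
  have apply_f {φ : characterSpace ℂ R} (hφ : φ (1 - f * c) = 1) : φ f = 0 :=
    (hq.apply_eq_one_iff φ).mp hφ
  rw [isAgDrazinInv_iff_exists_isIdempotentElem]
  refine ⟨e * (1 - f * c), he.mul hfc.one_sub, fun φ hφ ↦ ?_, ?_⟩
  · have hφe : φ e = 1 := character_apply_eq_one_of_mul he hφ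
    have hφq : φ (1 - f * c) = 1 := by rwa [map_mul, hφe, one_mul] at hφ
    simpa [apply_f hφq] using hte φ hφe
  · have hacc_fc : MemAcc ((t + f) * (f * c)) :=
      memAcc_of_isIntegral (isIntegral_mul_of_isIdempotentElem hfc hf _)
    refine MemAcc.piecewise hq.isIdempotentElem hacc hacc_fc (fun φ hφ ↦ ?_) fun φ hφ ↦ ?_
    · simp [apply_f hφ]
    · have hφfc : φ (f * c) = 1 := by rwa [map_sub, map_one, sub_eq_zero, eq_comm] at hφ
      rw [map_mul, map_mul, hφfc, map_sub, map_mul, hφ, mul_zero, map_one, sub_zero]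

theorem disjoint_spectrum_mul_of_norm_lt {a f : R} {r : ℝ} (hr : 0 < r) (hf : IsIdempotentElem f)
    (hfr : ∀ φ : characterSpace ℂ R, φ f = 1 ↔ ‖φ a‖ < r) :
    Disjoint (spectrum ℂ (a * f)) (spectrum ℂ (a * (1 - f) + (r : ℂ) • f)) := by
  refine Set.disjoint_left.mpr fun z hinner houter ↦ (?_ : ‖z‖ < r).not_ge ?_
  · obtain ⟨φ, rfl⟩ := CharacterSpace.mem_spectrum_iff_exists.mp hinner
    rcases character_apply_eq_zero_or_one hf φ with hφ | hφ
    · simpa [hφ] using hr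
    · simpa [hφ] using (hfr φ).mp hφ
  · obtain ⟨φ, rfl⟩ := CharacterSpace.mem_spectrum_iff_exists.mp houter
    rcases character_apply_eq_zero_or_one hf φ with hφ | hφ
    · simpa only [map_add, map_mul, map_sub, map_one, map_smul, hφ, sub_zero, mul_one, smul_zero,
        add_zero, not_lt, zero_ne_one, false_iff] using hfr φ
    · simp only [map_add, map_mul, map_sub, map_one, map_smul, hφ, sub_self, mul_zero, zero_add,
        smul_eq_mul, mul_one, Complex.norm_real, Real.norm_eq_abs, le_abs_self]

end Commutative

section Bicommutant

variable {A : Type*} [NormedRing A] [NormedAlgebra ℂ A] {s : Set A}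

/-- The bicommutant of `s`: the elements commuting with everything that commutes with `s`. It is a
closed full subalgebra containing `s`, and it is commutative as soon as the elements of `s` commute
with each other. -/
abbrev bicommutant (s : Set A) : Subalgebra ℂ A :=
  Subalgebra.centralizer ℂ (Set.centralizer s)

instance [CompleteSpace A] : CompleteSpace (bicommutant s) :=
  (Set.isClosed_centralizer (Set.centralizer s)).completeSpace_coe

/-- The structure on the bicommutant of a commuting set that gives access to Gelfand theory. -/
abbrev bicommutantNormedCommRing (hs : ∀ x ∈ s, ∀ y ∈ s, x * y = y * x) :
    NormedCommRing (bicommutant s) where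
  __ := (inferInstance : NormedRing (bicommutant s))
  mul_comm x y := Subtype.ext (Set.centralizer_centralizer_comm_of_comm hs x x.2 y y.2)

theorem mem_bicommutant_of_forall_commute {x y : A} (hx : x ∈ bicommutant s)
    (hxy : ∀ z, Commute z x → Commute z y) : y ∈ bicommutant s :=
  fun z hz ↦ hxy z (hx z hz)

theorem isUnit_coe_bicommutant {a : bicommutant s} : IsUnit (a : A) ↔ IsUnit a := by
  refine ⟨fun ha ↦ ?_, fun ha ↦ ha.map (bicommutant s).val⟩
  obtain ⟨u, hu⟩ := ha
  have hmem : (↑u⁻¹ : A) ∈ bicommutant s :=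
    mem_bicommutant_of_forall_commute a.2 fun z hz ↦ (hu ▸ hz : Commute z u).units_inv_right
  refine isUnit_iff_exists.mpr ⟨⟨_, hmem⟩, Subtype.ext ?_, Subtype.ext ?_⟩ <;> simp [← hu]

theorem spectrum_coe_bicommutant (a : bicommutant s) : spectrum ℂ (a : A) = spectrum ℂ a := by
  ext z
  exact not_congr (isUnit_coe_bicommutant (a := algebraMap ℂ (bicommutant s) z - a))

theorem isQuasinilpotent_coe_bicommutant {a : bicommutant s} :
    IsQuasinilpotent (a : A) ↔ IsQuasinilpotent a := by
  rw [IsQuasinilpotent, IsQuasinilpotent, spectrum_coe_bicommutant]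

variable [CompleteSpace A]

theorem isGDrazinInv_coe_bicommutant {a : bicommutant s} :
    IsGDrazinInv (a : A) ↔ IsGDrazinInv a := by
  constructor
  · rintro ⟨x, hax, hxax, hquasi⟩
    have hx : x ∈ bicommutant s := mem_bicommutant_of_forall_commute a.2 fun z ↦
      commute_of_isQuasinilpotent hax hxax hquasi
    lift x to bicommutant s using hx
    exact ⟨x, Subtype.ext hax, Subtype.ext hxax, isQuasinilpotent_coe_bicommutant.mp hquasi⟩
  · rintro ⟨x, hax, hxax, hquasi⟩
    exact ⟨x, congrArg Subtype.val hax, congrArg Subtype.val hxax,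
      isQuasinilpotent_coe_bicommutant.mpr hquasi⟩

theorem memAcc_coe_bicommutant {a : bicommutant s} : MemAcc (a : A) ↔ MemAcc a :=
  forall₂_congr fun l _ ↦ isGDrazinInv_coe_bicommutant (a := a - l • 1)

theorem isAgDrazinInverseOf_coe_bicommutant {x a : bicommutant s} :
    IsAgDrazinInverseOf (x : A) (a : A) ↔ IsAgDrazinInverseOf x a := by
  simp only [IsAgDrazinInverseOf, ← memAcc_coe_bicommutant, Subtype.ext_iff]
  rfl

theorem IsAgDrazinInv.exists_forall_commute_coe (hs : ∀ x ∈ s, ∀ y ∈ s, x * y = y * x)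
    {a : bicommutant s} (ha : IsAgDrazinInv a) :
    ∃ x : bicommutant s, IsAgDrazinInverseOf x a ∧ ∀ z, Commute z (a : A) → Commute z (x : A) := by
  let _ := bicommutantNormedCommRing hs
  obtain ⟨r, hr, f, hf, hfr, hacc⟩ := ha.exists_isIdempotentElem_norm_lt
  have hne (φ : WeakDual.characterSpace ℂ (bicommutant s)) (hφ : φ (1 - f) = 1) : φ a ≠ 0 :=
    fun hφa ↦ by simp [(hfr φ).mpr (by simpa [hφa] using hr)] at hφ
  obtain ⟨x, hax, hx⟩ := exists_isAgDrazinInverseOf hf.one_sub hne (by rwa [sub_sub_cancel])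
  refine ⟨x, hx, fun z hza ↦ ?_⟩
  have he : IsIdempotentElem ((1 - f : bicommutant s) : A) := hf.one_sub.map (bicommutant s).val
  have hae : Commute (a : A) ↑(1 - f) := (Commute.all a (1 - f)).map (bicommutant s).val
  have hze : Commute z ↑(1 - f) := by
    refine commute_of_disjoint_spectrum he hae r ?_ hza
    have hdisj := (disjoint_spectrum_mul_of_norm_lt hr hf hfr).symm
    rw [← spectrum_coe_bicommutant, ← spectrum_coe_bicommutant] at hdisj
    simpa using hdisj
  rw [← hax] at hze
  exact commute_of_commute_mul (congrArg Subtype.val hx.1) (congrArg Subtype.val hx.2.1) hza hze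

theorem IsAgDrazinInv.exists_forall_commute {a : A} (ha : IsAgDrazinInv a) :
    ∃ x, IsAgDrazinInverseOf x a ∧ ∀ z, Commute z a → Commute z x := by
  obtain ⟨y, hy⟩ := ha
  have hcomm : ∀ u ∈ ({a, y} : Set A), ∀ v ∈ ({a, y} : Set A), u * v = v * u := by
    rintro u (rfl | rfl) v (rfl | rfl) <;> simp [hy.1]
  have hsub := Set.subset_centralizer_centralizer (S := {a, y})
  let a' : bicommutant {a, y} := ⟨a, hsub (by simp)⟩
  let y' : bicommutant {a, y} := ⟨y, hsub (by simp)⟩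
  have ha' : IsAgDrazinInv a' := ⟨y', isAgDrazinInverseOf_coe_bicommutant.mp hy⟩
  obtain ⟨x, hx, hcommute⟩ := ha'.exists_forall_commute_coe hcomm
  exact ⟨x, isAgDrazinInverseOf_coe_bicommutant.mpr hx, hcommute⟩

theorem isAgDrazinInv_coe_bicommutant {a : bicommutant s} :
    IsAgDrazinInv (a : A) ↔ IsAgDrazinInv a := by
  constructor
  · intro ha
    obtain ⟨x, hx, hcommute⟩ := ha.exists_forall_commute
    lift x to bicommutant s using mem_bicommutant_of_forall_commute a.2 hcommute
    exact ⟨x, isAgDrazinInverseOf_coe_bicommutant.mp hx⟩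
  · rintro ⟨x, hx⟩
    exact ⟨x, isAgDrazinInverseOf_coe_bicommutant.mpr hx⟩

end Bicommutant

theorem agDrazin_add_power_finiteRank_general {A : Type*} [NormedRing A] [NormedAlgebra ℂ A]
    [CompleteSpace A] {t f : A} {n : ℕ} (ht : IsAgDrazinInv t) (htf : t * f = f * t)
    (hf : ∀ w, Commute w f → IsIntegral ℂ (f ^ n * w)) : IsAgDrazinInv (t + f) := by
  have hcomm : ∀ u ∈ ({t, f} : Set A), ∀ v ∈ ({t, f} : Set A), u * v = v * u := by
    rintro u (rfl | rfl) v (rfl | rfl) <;> simp [htf]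
  let _ := bicommutantNormedCommRing hcomm
  have hsub := Set.subset_centralizer_centralizer (S := {t, f})
  let t' : bicommutant {t, f} := ⟨t, hsub (by simp)⟩
  let f' : bicommutant {t, f} := ⟨f, hsub (by simp)⟩
  have ht' : IsAgDrazinInv t' := isAgDrazinInv_coe_bicommutant.mp ht
  have hf' (w : bicommutant {t, f}) : IsIntegral ℂ (f' ^ n * w) := by
    rw [← isIntegral_algHom_iff (bicommutant {t, f}).val Subtype.val_injective]
    exact hf w ((Commute.all w f').map (bicommutant {t, f}).val)
  exact isAgDrazinInv_coe_bicommutant.mpr (ht'.add_of_isIntegral_pow_mul hf')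

theorem agDrazin_add_power_finiteRank {X : Type*} [NormedAddCommGroup X] [NormedSpace ℂ X]
    [CompleteSpace X] (T F : X →L[ℂ] X)
    (hT : IsAgDrazinInv T)
    (hF : ∃ n : ℕ, 0 < n ∧ FiniteDimensional ℂ (LinearMap.range ((F ^ n : X →L[ℂ] X) : X →ₗ[ℂ] X)))
    (hcomm : T * F = F * T) :
    IsAgDrazinInv (T + F) := by
  obtain ⟨n, -, hrange⟩ := hF
  exact agDrazin_add_power_finiteRank_general hT hcomm fun W _ ↦
    isIntegral_continuousLinearMap_mul_of_finite_range (F ^ n) W
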